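/- Let u > 0, let n ≥ 1 be a natural number with nu ≤ 1/2, let δ_1, …, δ_n be real numbers with |δ_i| ≤ u, and let ρ_1, …, ρ_n ∈ {+1, -1}. Define θ by 1 + θ = sqrt(∏_{i=1}^n (1 + δ_i)^{ρ_i}). If moreover (3 - 2nu)·(⌊n/2⌋ + 1)²·u ≤ 2 + ⌊n/2⌋ - ⌈n/2⌉, then |θ| ≤ γ_{⌊n/2⌋ + 1}, where γ_m := mu/(1 - mu). -/

import Mathlib

/-!
Each factor `(1 + δ i) ^ ρ i` lies in `[1 - u, (1 - u)⁻¹]`, so a product of `n` of them lies in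
`[(1 - u) ^ n, ((1 - u) ^ n)⁻¹]`. For a real `y ≥ max 1 (n / 2)` with `y * u < 1`, Bernoulli's
inequality with exponent `y` gives `1 - y * u ≤ (1 - u) ^ y ≤ √((1 - u) ^ n)`. The square root of
the product therefore lies in `[1 - y * u, (1 - y * u)⁻¹]`, and the larger of the distances from `1`
to the two endpoints is `(1 - y * u)⁻¹ - 1 = y * u / (1 - y * u)`.
-/

section OrderedField

variable {K : Type*} [Field K] [LinearOrder K] [IsStrictOrderedRing K]

theorem zpow_mem_Icc_inv_of_eq_one_or_neg_one {a x : K} {r : ℤ} (ha : 0 < a)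
    (hx : x ∈ Set.Icc a a⁻¹) (hr : r = 1 ∨ r = -1) : x ^ r ∈ Set.Icc a a⁻¹ := by
  rcases hr with rfl | rfl
  · rwa [zpow_one]
  · rw [zpow_neg_one]
    exact ⟨(le_inv_comm₀ ha (ha.trans_le hx.1)).mpr hx.2, inv_anti₀ ha hx.1⟩

theorem one_add_mem_Icc_one_sub_inv {u d : K} (hu : u < 1) (hd : |d| ≤ u) :
    1 + d ∈ Set.Icc (1 - u) (1 - u)⁻¹ := by
  obtain ⟨hneg, hpos⟩ := abs_le.mp hd
  have h_upper : 1 + u ≤ (1 - u)⁻¹ := by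
    rw [← one_div, le_div_iff₀ (sub_pos.mpr hu)]
    linarith [sq_nonneg u]
  exact ⟨by linarith, by linarith⟩

theorem prod_mem_Icc_pow_card {ι : Type*} {s : Finset ι} {f : ι → K} {a b : K} (ha : 0 ≤ a)
    (hf : ∀ i ∈ s, f i ∈ Set.Icc a b) : ∏ i ∈ s, f i ∈ Set.Icc (a ^ s.card) (b ^ s.card) := by
  rw [← Finset.prod_const, ← Finset.prod_const]
  exact ⟨Finset.prod_le_prod (fun _ _ ↦ ha) fun i hi ↦ (hf i hi).1,
    Finset.prod_le_prod (fun i hi ↦ ha.trans (hf i hi).1) fun i hi ↦ (hf i hi).2⟩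

theorem abs_sub_one_le_div_one_sub {x z : K} (hx : x < 1)
    (hz : z ∈ Set.Icc (1 - x) (1 - x)⁻¹) : |z - 1| ≤ x / (1 - x) := by
  have hpos : 0 < 1 - x := sub_pos.mpr hx
  have h_eq : x / (1 - x) = (1 - x)⁻¹ - 1 := by field_simp; ring
  have h_le : x ≤ x / (1 - x) := by
    rw [le_div_iff₀ hpos]
    linarith [sq_nonneg x]
  exact abs_le.mpr ⟨by linarith [hz.1], by linarith [hz.2]⟩

end OrderedField

theorem sqrt_mem_Icc_inv {b p : ℝ} (hb : 0 ≤ b) (hp : p ∈ Set.Icc (b ^ 2) (b ^ 2)⁻¹) :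
    √p ∈ Set.Icc b b⁻¹ :=
  ⟨Real.le_sqrt_of_sq_le hp.1,
    Real.sqrt_le_iff.mpr ⟨inv_nonneg.mpr hb, (inv_pow b 2).symm ▸ hp.2⟩⟩

theorem sq_one_sub_mul_le_one_sub_pow {u y : ℝ} {n : ℕ} (hu : 0 ≤ u) (hy : 1 ≤ y)
    (hn : (n : ℝ) ≤ 2 * y) (hyu : y * u ≤ 1) : (1 - y * u) ^ 2 ≤ (1 - u) ^ n := by
  have hu_le : u ≤ 1 := (le_mul_of_one_le_left hu hy).trans hyu
  have h_base : 0 ≤ 1 - u := sub_nonneg.mpr hu_le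
  have bernoulli : 1 - y * u ≤ (1 - u) ^ y := by
    simpa only [mul_neg, ← sub_eq_add_neg] using
      one_add_mul_self_le_rpow_one_add (neg_le_neg hu_le) hy
  calc (1 - y * u) ^ 2 ≤ ((1 - u) ^ y) ^ 2 := pow_le_pow_left₀ (sub_nonneg.mpr hyu) bernoulli 2
    _ = (1 - u) ^ (2 * y) := by rw [mul_comm, Real.rpow_mul h_base, Real.rpow_two]
    _ ≤ (1 - u) ^ (n : ℝ) :=
      Real.rpow_le_rpow_of_exponent_ge' h_base (sub_le_self 1 hu) n.cast_nonneg hn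
    _ = (1 - u) ^ n := Real.rpow_natCast _ n

theorem abs_theta_le_gamma_halfn_succ_general {ι : Type*} {s : Finset ι} {u y : ℝ} (hu : 0 ≤ u)
    (hy : 1 ≤ y) (hs : (s.card : ℝ) ≤ 2 * y) (hyu : y * u < 1)
    {δ : ι → ℝ} (hδ : ∀ i ∈ s, |δ i| ≤ u) {ρ : ι → ℤ} (hρ : ∀ i ∈ s, ρ i = 1 ∨ ρ i = -1)
    {θ : ℝ} (hθ : 1 + θ = √(∏ i ∈ s, (1 + δ i) ^ ρ i)) :
    |θ| ≤ y * u / (1 - y * u) := by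
  have hu_lt : u < 1 := (le_mul_of_one_le_left hu hy).trans_lt hyu
  have h_base : 0 < 1 - u := sub_pos.mpr hu_lt
  have h_gap : 0 < 1 - y * u := sub_pos.mpr hyu
  have h_sq := sq_one_sub_mul_le_one_sub_pow hu hy hs hyu.le
  obtain ⟨h_lower, h_upper⟩ := prod_mem_Icc_pow_card h_base.le fun i hi ↦
    zpow_mem_Icc_inv_of_eq_one_or_neg_one h_base
      (one_add_mem_Icc_one_sub_inv hu_lt (hδ i hi)) (hρ i hi)
  rw [inv_pow] at h_upper
  have h_sqrt : 1 + θ ∈ Set.Icc (1 - y * u) (1 - y * u)⁻¹ :=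
    hθ ▸ sqrt_mem_Icc_inv h_gap.le
      ⟨h_sq.trans h_lower, h_upper.trans (inv_anti₀ (pow_pos h_gap 2) h_sq)⟩
  simpa only [add_sub_cancel_left] using abs_sub_one_le_div_one_sub hyu h_sqrt

theorem natCast_le_two_mul_half_add_one (n : ℕ) : (n : ℝ) ≤ 2 * ((n / 2 : ℕ) + 1 : ℝ) := by
  exact_mod_cast (by lia : n ≤ 2 * (n / 2 + 1))

theorem half_add_one_mul_lt_one {u : ℝ} {n : ℕ} (hu : 0 ≤ u) (hn : 1 ≤ n)
    (hnu : (n : ℝ) * u ≤ 1 / 2) : ((n / 2 : ℕ) + 1 : ℝ) * u < 1 := by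
  have hu_le : u ≤ n * u := le_mul_of_one_le_left hu (by exact_mod_cast hn)
  calc ((n / 2 : ℕ) + 1 : ℝ) * u ≤ ((n : ℝ) / 2 + 1) * u := by gcongr; exact Nat.cast_div_le
    _ < 1 := by linarith

/-- Let `u > 0`, `n ≥ 1` with `n*u ≤ 1/2`, `|δ i| ≤ u` and `ρ i = ±1`, and let
`1 + θ = sqrt (∏ i, (1 + δ i) ^ ρ i)`.  If moreover
`(3 - 2*n*u) * (⌊n/2⌋ + 1)^2 * u ≤ 2 + ⌊n/2⌋ - ⌈n/2⌉`, then `|θ| ≤ γ (⌊n/2⌋ + 1)`,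
where `γ m = m*u/(1 - m*u)`. -/
theorem abs_theta_le_gamma_halfn_succ (u : ℝ) (hu : 0 < u) (n : ℕ) (hn : 1 ≤ n)
    (hnu : (n : ℝ) * u ≤ 1 / 2)
    (δ : Fin n → ℝ) (hδ : ∀ i, |δ i| ≤ u)
    (ρ : Fin n → ℤ) (hρ : ∀ i, ρ i = 1 ∨ ρ i = -1)
    (θ : ℝ) (hθ : 1 + θ = Real.sqrt (∏ i, (1 + δ i) ^ ρ i))
    (hcond : (3 - 2 * ((n : ℝ) * u)) * ((n / 2 : ℕ) + 1 : ℝ) ^ 2 * u ≤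
        2 + ((n / 2 : ℕ) : ℝ) - (((n + 1) / 2 : ℕ) : ℝ)) :
    |θ| ≤ ((n / 2 : ℕ) + 1 : ℝ) * u / (1 - ((n / 2 : ℕ) + 1 : ℝ) * u) := by
  exact abs_theta_le_gamma_halfn_succ_general hu.le (by simp)
    (by simpa only [Finset.card_fin] using natCast_le_two_mul_half_add_one n)
    (half_add_one_mul_lt_one hu.le hn hnu) (fun i _ ↦ hδ i) (fun i _ ↦ hρ i) hθ
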